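/- Let f : ℝ → ℂ, let b ∈ (0,1), and suppose fg and the Stein derivatives below are defined. Then ‖𝒟^b(fg)‖_{L²} ≤ ‖g 𝒟^b f‖_{L²} + ‖f 𝒟^b g‖_{L²} whenever the right-hand side is finite, where 𝒟^b h(x) = (∫ |h(x)-h(y)|²|x-y|^{-1-2b} dy)^{1/2}. -/

import Mathlib

open MeasureTheory

lemma aux_lint (K : ℝ × ℝ → ℝ) (hm : Measurable K) (h0 : ∀ p, 0 ≤ K p)
    (hi : ∀ x, Integrable (fun y => K (x, y))) :
    ∫⁻ x, ENNReal.ofReal (∫ y, K (x, y)) = ∫⁻ p : ℝ × ℝ, ENNReal.ofReal (K p) := by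
  have e : (∫⁻ p : ℝ × ℝ, ENNReal.ofReal (K p)) = ∫⁻ x, ∫⁻ y, ENNReal.ofReal (K (x, y)) := by
    rw [Measure.volume_eq_prod, lintegral_prod _ (hm.ennreal_ofReal.aemeasurable)]
  rw [e]
  refine lintegral_congr fun x => ?_
  exact ofReal_integral_eq_lintegral_ofReal (hi x) (Filter.Eventually.of_forall fun y => h0 _)

lemma aux_int (K : ℝ × ℝ → ℝ) (hm : Measurable K) (h0 : ∀ p, 0 ≤ K p)
    (hi : ∀ x, Integrable (fun y => K (x, y))) :
    ∫ x, ∫ y, K (x, y) = (∫⁻ p : ℝ × ℝ, ENNReal.ofReal (K p)).toReal := by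
  rw [← aux_lint K hm h0 hi, integral_eq_lintegral_of_nonneg_ae]
  · exact Filter.Eventually.of_forall fun x => integral_nonneg fun y => h0 _
  · exact (hm.stronglyMeasurable.integral_prod_right' (ν := volume)).aestronglyMeasurable

lemma aux_fin (K : ℝ × ℝ → ℝ) (hm : Measurable K) (h0 : ∀ p, 0 ≤ K p)
    (hi : ∀ x, Integrable (fun y => K (x, y))) (h : Integrable (fun x => ∫ y, K (x, y))) :
    (∫⁻ p : ℝ × ℝ, ENNReal.ofReal (K p)) ≠ ⊤ := by
  rw [← aux_lint K hm h0 hi]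
  exact h.lintegral_lt_top.ne

lemma aux_alg (u v u' v' : ℂ) (d : ℝ) (hd : 0 ≤ d) :
    ‖u * v - u' * v'‖ ^ 2 / d
      ≤ (Real.sqrt (‖v'‖ ^ 2 * (‖u' - u‖ ^ 2 / d)) + Real.sqrt (‖u‖ ^ 2 * (‖v - v'‖ ^ 2 / d))) ^ 2 := by
  have e1 : Real.sqrt (‖v'‖ ^ 2 * (‖u' - u‖ ^ 2 / d)) = ‖v'‖ * ‖u' - u‖ / Real.sqrt d := by
    rw [Real.sqrt_mul (by positivity), Real.sqrt_div (by positivity),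
      Real.sqrt_sq (norm_nonneg _), Real.sqrt_sq (norm_nonneg _), mul_div_assoc]
  have e2 : Real.sqrt (‖u‖ ^ 2 * (‖v - v'‖ ^ 2 / d)) = ‖u‖ * ‖v - v'‖ / Real.sqrt d := by
    rw [Real.sqrt_mul (by positivity), Real.sqrt_div (by positivity),
      Real.sqrt_sq (norm_nonneg _), Real.sqrt_sq (norm_nonneg _), mul_div_assoc]
  rw [e1, e2, ← add_div, div_pow, Real.sq_sqrt hd]
  gcongr
  rw [norm_sub_rev u' u, ← norm_mul, ← norm_mul]
  calc ‖u * v - u' * v'‖ = ‖v' * (u - u') + u * (v - v')‖ := by ring_nf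
    _ ≤ _ := norm_add_le _ _

/-- Leibniz rule for the Stein derivative `𝒟^b h(x) = (∫ |h(x)-h(y)|²/|x-y|^{1+2b} dy)^{1/2}`,
`b ∈ (0,1)`: whenever all the Stein derivatives involved are defined and the right-hand side
is finite, `‖𝒟^b(fg)‖_{L²} ≤ ‖g 𝒟^b f‖_{L²} + ‖f 𝒟^b g‖_{L²}`. -/
theorem stmt15 (b : ℝ) (hb : b ∈ Set.Ioo (0:ℝ) 1) (f g : ℝ → ℂ)
    (hfm : Measurable f) (hgm : Measurable g)
    (hf : ∀ x, Integrable (fun y => ‖f x - f y‖ ^ 2 / |x - y| ^ (1 + 2 * b)))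
    (hg : ∀ x, Integrable (fun y => ‖g x - g y‖ ^ 2 / |x - y| ^ (1 + 2 * b)))
    (hfg : ∀ x, Integrable (fun y => ‖f x * g x - f y * g y‖ ^ 2 / |x - y| ^ (1 + 2 * b)))
    (h1 : Integrable (fun x => ‖g x‖ ^ 2 * ∫ y, ‖f x - f y‖ ^ 2 / |x - y| ^ (1 + 2 * b)))
    (h2 : Integrable (fun x => ‖f x‖ ^ 2 * ∫ y, ‖g x - g y‖ ^ 2 / |x - y| ^ (1 + 2 * b))) :
    (∫ x : ℝ, ∫ y : ℝ, ‖f x * g x - f y * g y‖ ^ 2 / |x - y| ^ (1 + 2 * b)) ^ (1/2 : ℝ)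
      ≤ (∫ x : ℝ, ‖g x‖ ^ 2 * ∫ y, ‖f x - f y‖ ^ 2 / |x - y| ^ (1 + 2 * b)) ^ (1/2 : ℝ)
        + (∫ x : ℝ, ‖f x‖ ^ 2 * ∫ y, ‖g x - g y‖ ^ 2 / |x - y| ^ (1 + 2 * b)) ^ (1/2 : ℝ) := by
  have m1 : Measurable (fun p : ℝ × ℝ => ‖g p.1‖ ^ 2 * (‖f p.1 - f p.2‖ ^ 2 / |p.1 - p.2| ^ (1 + 2 * b))) := by
    fun_prop
  have m2 : Measurable (fun p : ℝ × ℝ => ‖f p.1‖ ^ 2 * (‖g p.1 - g p.2‖ ^ 2 / |p.1 - p.2| ^ (1 + 2 * b))) := by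
    fun_prop
  have m0 : Measurable (fun p : ℝ × ℝ => ‖f p.1 * g p.1 - f p.2 * g p.2‖ ^ 2 / |p.1 - p.2| ^ (1 + 2 * b)) := by
    fun_prop
  simp only [← integral_const_mul] at h1 h2 ⊢
  have i1 := fun x => (hf x).const_mul (‖g x‖ ^ 2)
  have i2 := fun x => (hg x).const_mul (‖f x‖ ^ 2)
  have p0 := fun p : ℝ × ℝ => Real.rpow_nonneg (abs_nonneg (p.1 - p.2)) (1 + 2 * b)
  have n1 := fun p : ℝ × ℝ => mul_nonneg (sq_nonneg ‖g p.1‖) (div_nonneg (sq_nonneg ‖f p.1 - f p.2‖) (p0 p))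
  have n2 := fun p : ℝ × ℝ => mul_nonneg (sq_nonneg ‖f p.1‖) (div_nonneg (sq_nonneg ‖g p.1 - g p.2‖) (p0 p))
  have n0 := fun p : ℝ × ℝ => div_nonneg (sq_nonneg ‖f p.1 * g p.1 - f p.2 * g p.2‖) (p0 p)
  have t1 := aux_fin _ m1 n1 i1 h1
  have t2 := aux_fin _ m2 n2 i2 h2
  have E0 := aux_int _ m0 n0 hfg
  have E1 := aux_int _ m1 n1 i1
  have E2 := aux_int _ m2 n2 i2
  simp only at E0 E1 E2
  rw [E0, E1, E2]
  set K1 : ℝ × ℝ → ℝ := fun p => ‖g p.1‖ ^ 2 * (‖f p.1 - f p.2‖ ^ 2 / |p.1 - p.2| ^ (1 + 2 * b)) with hK1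
  set K2 : ℝ × ℝ → ℝ := fun p => ‖f p.1‖ ^ 2 * (‖g p.1 - g p.2‖ ^ 2 / |p.1 - p.2| ^ (1 + 2 * b)) with hK2
  change (∫⁻ p, ENNReal.ofReal (K1 p)) ≠ ⊤ at t1
  change (∫⁻ p, ENNReal.ofReal (K2 p)) ≠ ⊤ at t2
  have sw : ∫⁻ p : ℝ × ℝ, ENNReal.ofReal (K1 p.swap) = ∫⁻ p, ENNReal.ofReal (K1 p) := by
    rw [Measure.volume_eq_prod]
    exact lintegral_prod_swap (fun p => ENNReal.ofReal (K1 p))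
  have sq : ∀ r : ℝ, 0 ≤ r → ENNReal.ofReal (Real.sqrt r) ^ (2:ℝ) = ENNReal.ofReal r := by
    intro r hr
    rw [ENNReal.ofReal_rpow_of_nonneg (Real.sqrt_nonneg _) (by norm_num)]
    norm_num [Real.sq_sqrt hr]
  have M := ENNReal.lintegral_Lp_add_le (μ := (volume : Measure (ℝ × ℝ))) (p := 2)
    (f := fun p => ENNReal.ofReal (Real.sqrt (K1 p.swap))) (g := fun p => ENNReal.ofReal (Real.sqrt (K2 p)))
    ((m1.comp measurable_swap).sqrt.ennreal_ofReal.aemeasurable) (m2.sqrt.ennreal_ofReal.aemeasurable) (by norm_num)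
  have s1 : ∀ p : ℝ × ℝ, ENNReal.ofReal (Real.sqrt (K1 p.swap)) ^ (2:ℝ) = ENNReal.ofReal (K1 p.swap) :=
    fun p => sq _ (n1 p.swap)
  have s2 : ∀ p : ℝ × ℝ, ENNReal.ofReal (Real.sqrt (K2 p)) ^ (2:ℝ) = ENNReal.ofReal (K2 p) :=
    fun p => sq _ (n2 p)
  simp only [s1, s2, sw, Pi.add_apply] at M
  have T : (∫⁻ p : ℝ × ℝ, ENNReal.ofReal (‖f p.1 * g p.1 - f p.2 * g p.2‖ ^ 2 / |p.1 - p.2| ^ (1 + 2 * b))) ^ (1/2 : ℝ)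
      ≤ (∫⁻ p, ENNReal.ofReal (K1 p)) ^ (1/2 : ℝ) + (∫⁻ p, ENNReal.ofReal (K2 p)) ^ (1/2 : ℝ) := by
    refine le_trans (ENNReal.rpow_le_rpow (lintegral_mono fun p => ?_) (by norm_num)) M
    dsimp only
    rw [← ENNReal.ofReal_add (Real.sqrt_nonneg _) (Real.sqrt_nonneg _),
      ENNReal.ofReal_rpow_of_nonneg (by positivity) (by norm_num)]
    refine ENNReal.ofReal_le_ofReal ?_
    rw [Real.rpow_two]
    have := aux_alg (f p.1) (g p.1) (f p.2) (g p.2) _ (p0 p)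
    simpa only [hK1, hK2, Prod.fst_swap, Prod.snd_swap, abs_sub_comm p.2 p.1] using this
  have r1 := ENNReal.rpow_ne_top_of_nonneg (y := (1/2 : ℝ)) (by norm_num) t1
  have r2 := ENNReal.rpow_ne_top_of_nonneg (y := (1/2 : ℝ)) (by norm_num) t2
  have F := ENNReal.toReal_mono (ENNReal.add_ne_top.2 ⟨r1, r2⟩) T
  rw [ENNReal.toReal_add r1 r2] at F
  simpa only [ENNReal.toReal_rpow] using F
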